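/- Fix an arity n ≥ 2. Let E and R be finite sets of entities and relations and let S be a finite set of n-ary facts, each fact being a tuple (r, e_1, ..., e_n) with r ∈ R and e_1, ..., e_n ∈ E. Then there exist a number of segments M ≥ n, a segment dimension q, entity embeddings e ↦ 𝐞 ∈ ℝ^{Mq} (a single embedding per entity shared across all n argument positions), relation embeddings r ↦ 𝐫 ∈ ℝ^{Mq}, and a sparse core tensor Z^n with m = min(n, M) = n segments (every block of Z^n belonging to {−I_1^n, I_0^n, I_1^n}) such that for every candidate fact s = (r, e_1, ..., e_n), the S2S score f_z(𝐫, 𝐞_1, ..., 𝐞_n; Z^n) computed on the first n segments equals 1 if s ∈ S and 0 if s ∉ S. -/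

import Mathlib

open Finset

/-- The `j`-th segment (of length `q`) of a vector in `ℝ^(M·q)`:
coordinates `(j-1)q+1` through `jq` (1-based), i.e. `j·q, …, j·q + q - 1` (0-based). -/
def seg (M q : ℕ) (v : Fin (M * q) → ℝ) (j : Fin M) : Fin q → ℝ :=
  fun k => v (finProdFinEquiv (j, k))

/-- Multilinear inner product of `n+1` vectors in `ℝ^q`. -/
def mip (n q : ℕ) (v : Fin (n + 1) → Fin q → ℝ) : ℝ :=
  ∑ k : Fin q, ∏ i : Fin (n + 1), v i k

/-- The `(n+1)`-order superdiagonal tensor `I_v^n` of size `q` in each mode: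
`v` when all indices coincide, `0` elsewhere. -/
def diagT (n q : ℕ) (v : ℝ) : (Fin (n + 1) → Fin q) → ℝ :=
  fun k => if ∀ i, k i = k 0 then v else 0

/-- Tucker product of an `(n+1)`-order tensor of size `q` in each mode with
vectors `u 0, …, u n ∈ ℝ^q`. -/
def tucker (n q : ℕ) (G : (Fin (n + 1) → Fin q) → ℝ)
    (u : Fin (n + 1) → Fin q → ℝ) : ℝ :=
  ∑ k : Fin (n + 1) → Fin q, G k * ∏ i : Fin (n + 1), u i (k i)

/-- S2S score of vectors `vs 0 = r, vs 1 = e_1, …, vs n = e_n ∈ ℝ^(m·q)` with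
an S2S core tensor `Z` for arity `n` with `m` segments of size `q`. -/
def s2sScore (n m q : ℕ)
    (Z : (Fin (n + 1) → Fin m) → (Fin (n + 1) → Fin q) → ℝ)
    (vs : Fin (n + 1) → Fin (m * q) → ℝ) : ℝ :=
  ∑ j : Fin (n + 1) → Fin m, tucker n q (Z j) (fun i => seg m q (vs i) (j i))

/-- S2S score computed on the first `m` segments of vectors in `ℝ^(M·q)` (`m ≤ M`). -/
def s2sScoreFirst (n m M q : ℕ) (h : m ≤ M)
    (Z : (Fin (n + 1) → Fin m) → (Fin (n + 1) → Fin q) → ℝ)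
    (vs : Fin (n + 1) → Fin (M * q) → ℝ) : ℝ :=
  ∑ j : Fin (n + 1) → Fin m,
    tucker n q (Z j) (fun i => seg M q (vs i) (Fin.castLE h (j i)))

/-- A sparse core tensor: every block lies in `{-I_1^n, I_0^n, I_1^n}`. -/
def SparseCore (n m q : ℕ)
    (Z : (Fin (n + 1) → Fin m) → (Fin (n + 1) → Fin q) → ℝ) : Prop :=
  ∀ j, Z j = diagT n q (-1) ∨ Z j = diagT n q 0 ∨ Z j = diagT n q 1

/-! A core tensor with a single nonzero block `I_1^n`, at the segment tuple `(1, 1, 2, …, n)`, makes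
the score pair the first relation segment with the `i`-th segment of the entity in argument
position `i`; this is how one embedding per entity, shared by all positions, still tells the
positions apart. Give each stored fact its own coordinate of a segment, and let the `i`-th segment
of an entity be the indicator of the facts carrying that entity in position `i`. The multilinear
inner product of indicators is the cardinality of the intersection, so the score counts the stored
facts that agree with the candidate in the relation and in every argument. -/

section TuckerProduct

variable {n m M q : ℕ}

theorem tucker_diagT (v : ℝ) (u : Fin (n + 1) → Fin q → ℝ) :
    tucker n q (diagT n q v) u = v * mip n q u := by
  rw [mip, mul_sum]
  refine (sum_of_injOn (Function.const (Fin (n + 1))) (Function.const_injective.injOn)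
    (fun _ _ => mem_univ _) (fun k _ hk => ?_) fun k _ => by simp [diagT]).symm
  have hk_not_const : ¬ ∀ i, k i = k 0 := fun h => hk ⟨k 0, by simp, funext fun i => (h i).symm⟩
  simp [diagT, hk_not_const]

theorem mip_indicator (A : Fin (n + 1) → Set (Fin q)) :
    mip n q (fun i => (A i).indicator 1) = (⋂ i, A i).ncard := by
  classical
  calc mip n q (fun i => (A i).indicator 1)
      = ∑ k, (⋂ i, A i).indicator 1 k := by simp [mip, prod_indicator_const_apply]
    _ = (⋂ i, A i).ncard := by
      simp [Set.indicator_apply, Set.ncard_eq_toFinset_card']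

theorem mip_indicator_image {ι : Type*} (slot : ι ↪ Fin q) (A : Fin (n + 1) → Set ι) :
    mip n q (fun i => (slot '' A i).indicator 1) = (⋂ i, A i).ncard := by
  rw [mip_indicator, ← slot.injective.injOn.image_iInter_eq,
    Set.ncard_image_of_injective _ slot.injective]

/-- The core tensor whose only nonzero block is `I_1^n`, at the segment tuple `p`. -/
def singleBlockCore (q : ℕ) (p : Fin (n + 1) → Fin m) :
    (Fin (n + 1) → Fin m) → (Fin (n + 1) → Fin q) → ℝ :=
  fun j => diagT n q (if j = p then 1 else 0)

theorem sparseCore_singleBlockCore (p : Fin (n + 1) → Fin m) :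
    SparseCore n m q (singleBlockCore q p) := fun j => by
  by_cases hj : j = p <;> simp [singleBlockCore, hj]

theorem s2sScoreFirst_singleBlockCore (h : m ≤ M) (p : Fin (n + 1) → Fin m)
    (vs : Fin (n + 1) → Fin (M * q) → ℝ) :
    s2sScoreFirst n m M q h (singleBlockCore q p) vs =
      mip n q (fun i => seg M q (vs i) (Fin.castLE h (p i))) := by
  simp [s2sScoreFirst, singleBlockCore, tucker_diagT]

/-- The vector of `ℝ^(M·q)` with prescribed segments. -/
def ofSegs (f : Fin M → Fin q → ℝ) : Fin (M * q) → ℝ :=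
  Function.uncurry f ∘ finProdFinEquiv.symm

theorem seg_ofSegs (f : Fin M → Fin q → ℝ) (j : Fin M) : seg M q (ofSegs f) j = f j := by
  ext k
  simp [seg, ofSegs]

end TuckerProduct

section FactEmbedding

variable {ι E R : Type*} {n M q : ℕ}

/-- For a family `F` of facts, the set of indices whose fact agrees with the candidate `(r, e)` in
its relation (position `0`) or in its argument at position `i + 1`. -/
def agreeSet (F : ι → R × (Fin n → E)) (r : R) (e : Fin n → E) : Fin (n + 1) → Set ι :=
  Fin.cases {s | (F s).1 = r} fun i => {s | (F s).2 i = e i}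

theorem iInter_agreeSet (F : ι → R × (Fin n → E)) (r : R) (e : Fin n → E) :
    ⋂ i, agreeSet F r e i = {s | F s = (r, e)} := by
  ext s
  simp [agreeSet, Fin.forall_fin_succ, Prod.ext_iff, funext_iff]

/-- The relation embedding: every segment is the indicator of the slots of the facts with
relation `r`. -/
noncomputable def relationEmbedding (M : ℕ) (F : ι → R × (Fin n → E)) (slot : ι ↪ Fin q)
    (r : R) : Fin (M * q) → ℝ :=
  ofSegs fun _ => (slot '' {s | (F s).1 = r}).indicator 1

/-- The entity embedding: the `i`-th segment is the indicator of the slots of the facts with `e` in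
argument position `i`, and the segments beyond the arity are zero. -/
noncomputable def entityEmbedding (hM : n ≤ M) (F : ι → R × (Fin n → E)) (slot : ι ↪ Fin q)
    (e : E) : Fin (M * q) → ℝ :=
  ofSegs <| Function.extend (Fin.castLE hM)
    (fun i => (slot '' {s | (F s).2 i = e}).indicator 1) 0

theorem seg_factEmbedding [NeZero n] (hM : n ≤ M) (F : ι → R × (Fin n → E)) (slot : ι ↪ Fin q)
    (r : R) (e : Fin n → E) (i : Fin (n + 1)) :
    seg M q
        (Fin.cases (relationEmbedding M F slot r) (fun i => entityEmbedding hM F slot (e i)) i)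
        (Fin.castLE hM (Fin.cons (α := fun _ => Fin n) 0 id i)) =
      (slot '' agreeSet F r e i).indicator 1 := by
  cases i using Fin.cases with
  | zero => simp [relationEmbedding, seg_ofSegs, agreeSet]
  | succ i => simp [entityEmbedding, seg_ofSegs, (Fin.castLE_injective hM).extend_apply, agreeSet]

theorem s2sScoreFirst_factEmbedding [NeZero n] (hM : n ≤ M) (F : ι → R × (Fin n → E))
    (slot : ι ↪ Fin q) (r : R) (e : Fin n → E) :
    s2sScoreFirst n n M q hM (singleBlockCore q (Fin.cons 0 id))
        (Fin.cases (relationEmbedding M F slot r) fun i => entityEmbedding hM F slot (e i)) =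
      {s | F s = (r, e)}.ncard := by
  simp only [s2sScoreFirst_singleBlockCore, seg_factEmbedding, mip_indicator_image,
    iInter_agreeSet]

end FactEmbedding

theorem ncard_setOf_coe_eq {α : Type*} [DecidableEq α] (S : Finset α) (a : α) :
    {s : S | (s : α) = a}.ncard = if a ∈ S then 1 else 0 := by
  split_ifs with ha
  · exact Set.ncard_eq_one.2 ⟨⟨a, ha⟩, by ext; simp [Subtype.ext_iff]⟩
  · have h_empty : {s : S | (s : α) = a} = ∅ :=
      Set.eq_empty_of_forall_notMem fun s hs => ha (hs ▸ s.2)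
    rw [h_empty, Set.ncard_empty]

theorem s2s_expressive_fixed_arity_general {E R : Type*} [DecidableEq E] [DecidableEq R]
    {n M q : ℕ} [NeZero n] (hM : n ≤ M) (S : Finset (R × (Fin n → E))) (hq : #S ≤ q) :
    ∃ (Eemb : E → Fin (M * q) → ℝ) (Remb : R → Fin (M * q) → ℝ)
      (Z : (Fin (n + 1) → Fin n) → (Fin (n + 1) → Fin q) → ℝ),
      SparseCore n n q Z ∧
      ∀ (r : R) (e : Fin n → E),
        s2sScoreFirst n n M q hM Z
            (Fin.cases (Remb r) (fun i => Eemb (e i)))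
          = if (r, e) ∈ S then 1 else 0 := by
  obtain ⟨slot⟩ : Nonempty (S ↪ Fin q) := Function.Embedding.nonempty_of_card_le (by simpa using hq)
  refine ⟨entityEmbedding hM Subtype.val slot, relationEmbedding M Subtype.val slot,
    singleBlockCore q (Fin.cons 0 id), sparseCore_singleBlockCore _, fun r e => ?_⟩
  rw [s2sScoreFirst_factEmbedding, ncard_setOf_coe_eq, Nat.cast_ite, Nat.cast_one, Nat.cast_zero]

/-- expressiveness of S2S at a fixed arity `n ≥ 2`: for any finite set `S`
of `n`-ary facts over finite entity and relation sets there exist a number of segments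
`M ≥ n`, a segment dimension `q ≥ 1`, a single shared embedding per entity and per
relation in `ℝ^(M·q)`, and a sparse core tensor `Z` with `m = min(n, M) = n` segments
(every block in `{-I_1^n, I_0^n, I_1^n}`) such that the S2S score computed on the first
`n` segments is `1` on facts in `S` and `0` on all other candidate facts. -/
theorem s2s_expressive_fixed_arity {E R : Type*}
    [Fintype E] [Fintype R] [DecidableEq E] [DecidableEq R]
    (n : ℕ) (hn : 2 ≤ n)
    (S : Finset (R × (Fin n → E))) :
    ∃ (M q : ℕ) (hM : n ≤ M) (_hq : 1 ≤ q)
      (Eemb : E → Fin (M * q) → ℝ) (Remb : R → Fin (M * q) → ℝ)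
      (Z : (Fin (n + 1) → Fin n) → (Fin (n + 1) → Fin q) → ℝ),
      SparseCore n n q Z ∧
      ∀ (r : R) (e : Fin n → E),
        s2sScoreFirst n n M q hM Z
            (Fin.cases (Remb r) (fun i => Eemb (e i)))
          = if (r, e) ∈ S then 1 else 0 := by
  have : NeZero n := ⟨by lia⟩
  exact ⟨n, #S + 1, le_rfl, Nat.le_add_left 1 _,
    s2s_expressive_fixed_arity_general le_rfl S (Nat.le_succ _)⟩
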